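/- Let F be a field and let T : Fin p → Fin q → Fin r → F be an order-3 tensor with slices S_i = T(·,·,i) ∈ Mat_{p,q}(F). Let a_1,…,a_k ∈ F^p, b_1,…,b_k ∈ F^q, and λ_{i,j} ∈ F for 1 ≤ i ≤ r, 1 ≤ j ≤ k, and set U_i = S_i − Σ_{j=1}^k λ_{i,j} a_j b_jᵀ. Then the tensor rank of T is at most Σ_{i=1}^r rank(U_i) + Σ_{j=1}^k rank(a_j b_jᵀ). -/

import Mathlib

/-- The tensor rank of an order-3 tensor `T : Fin p → Fin q → Fin r → F`: the least `l`
such that `T` is a sum of `l` pure tensors. -/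
noncomputable def tensorRank3 (F : Type*) [Field F] (p q r : ℕ)
    (T : Fin p → Fin q → Fin r → F) : ℕ :=
  sInf {l : ℕ | ∃ (a : Fin l → Fin p → F) (b : Fin l → Fin q → F) (c : Fin l → Fin r → F),
    ∀ i j k, T i j k = ∑ u : Fin l, a u i * b u j * c u k}

/-!
For any matrices `M_j`, with `e_i` the standard basis of `F^r`, the tensor splits as
`T = ∑_i U_i ⊗ e_i + ∑_j M_j ⊗ λ_{·,j}`, where `U_i = S_i - ∑_j λ_{i,j} M_j`. Tensor rank is
subadditive, and a rank factorization of a matrix `A` writes `A ⊗ c` as a sum of `rank A` pure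
tensors.
-/

theorem exists_rank_factorization {F m n : Type*} [Field F] [Fintype n] (A : Matrix m n F) :
    ∃ (B : Matrix m (Fin A.rank) F) (C : Matrix (Fin A.rank) n F), B * C = A := by
  classical
  let e : LinearMap.range A.mulVecLin ≃ₗ[F] (Fin A.rank → F) :=
    (Module.finBasis F (LinearMap.range A.mulVecLin)).equivFun
  refine ⟨LinearMap.toMatrix' ((LinearMap.range A.mulVecLin).subtype ∘ₗ e.symm.toLinearMap),
    LinearMap.toMatrix' (e.toLinearMap ∘ₗ A.mulVecLin.rangeRestrict), ?_⟩
  have factor_through_range :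
      ((LinearMap.range A.mulVecLin).subtype ∘ₗ e.symm.toLinearMap) ∘ₗ
        (e.toLinearMap ∘ₗ A.mulVecLin.rangeRestrict) = A.mulVecLin :=
    LinearMap.ext fun v => by simp
  rw [← LinearMap.toMatrix'_comp, factor_through_range, ← Matrix.toLin'_apply',
    LinearMap.toMatrix'_toLin']

/-- The outer product `A ⊗ c` of a matrix and a vector: the order-3 tensor whose slices are the
multiples of `A` by the entries of `c`. -/
def matrixOuter {R m n l : Type*} [Mul R] (A : Matrix m n R) (c : l → R) : m → n → l → R :=
  fun x y z => A x y * c z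

theorem eq_sum_matrixOuter_add_sum_matrixOuter {R m n l ι : Type*} [CommRing R] [Fintype l]
    [DecidableEq l] [Fintype ι] (T : m → n → l → R) (M : ι → Matrix m n R) (lam : l → ι → R) :
    T = ∑ i, matrixOuter ((Matrix.of fun x y => T x y i) - ∑ j, lam i j • M j) (Pi.single i 1)
      + ∑ j, matrixOuter (M j) (lam · j) := by
  ext x y z
  simp [matrixOuter, Matrix.sum_apply, Pi.single_apply, mul_comm]

theorem exists_eq_sum_pure {R κ : Type*} [Semiring R] {p q : ℕ} (T : Fin p → Fin q → κ → R) :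
    ∃ (l : ℕ) (a : Fin l → Fin p → R) (b : Fin l → Fin q → R) (c : Fin l → κ → R),
      ∀ i j k, T i j k = ∑ u, a u i * b u j * c u k := by
  -- `T = ∑_{x,y} e_x ⊗ e_y ⊗ T(x,y,·)`
  let e : Fin (p * q) ≃ Fin p × Fin q := finProdFinEquiv.symm
  refine ⟨p * q, fun u => Pi.single (e u).1 1, fun u => Pi.single (e u).2 1,
    fun u => T (e u).1 (e u).2, fun i j k => ?_⟩
  rw [e.sum_comp fun xy => (Pi.single xy.1 1 : Fin p → R) i * (Pi.single xy.2 1 : Fin q → R) j *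
    T xy.1 xy.2 k]
  simp [Fintype.sum_prod_type, Pi.single_apply]

section TensorRank

variable {F : Type*} [Field F] {p q r : ℕ}

theorem tensorRank3_le_card {ι : Type*} [Fintype ι] {T : Fin p → Fin q → Fin r → F}
    (a : ι → Fin p → F) (b : ι → Fin q → F) (c : ι → Fin r → F)
    (hT : ∀ i j k, T i j k = ∑ u, a u i * b u j * c u k) :
    tensorRank3 F p q r T ≤ Fintype.card ι := by
  let e := (Fintype.equivFin ι).symm
  exact Nat.sInf_le ⟨a ∘ e, b ∘ e, c ∘ e, fun i j k =>
    (hT i j k).trans (e.sum_comp fun u => a u i * b u j * c u k).symm⟩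

theorem exists_eq_sum_tensorRank3 (T : Fin p → Fin q → Fin r → F) :
    ∃ (a : Fin (tensorRank3 F p q r T) → Fin p → F) (b : Fin (tensorRank3 F p q r T) → Fin q → F)
      (c : Fin (tensorRank3 F p q r T) → Fin r → F),
      ∀ i j k, T i j k = ∑ u, a u i * b u j * c u k :=
  Nat.sInf_mem (exists_eq_sum_pure T)

theorem tensorRank3_zero : tensorRank3 F p q r 0 = 0 :=
  Nat.le_zero.mp <| tensorRank3_le_card (ι := Fin 0) 0 0 0 fun _ _ _ => by simp

theorem tensorRank3_add_le (S T : Fin p → Fin q → Fin r → F) :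
    tensorRank3 F p q r (S + T) ≤ tensorRank3 F p q r S + tensorRank3 F p q r T := by
  obtain ⟨a, b, c, hS⟩ := exists_eq_sum_tensorRank3 S
  obtain ⟨a', b', c', hT⟩ := exists_eq_sum_tensorRank3 T
  simpa using tensorRank3_le_card (T := S + T) (Sum.elim a a') (Sum.elim b b') (Sum.elim c c')
    fun i j k => by simp [hS, hT]

theorem tensorRank3_sum_le {ι : Type*} (s : Finset ι) (T : ι → Fin p → Fin q → Fin r → F) :
    tensorRank3 F p q r (∑ i ∈ s, T i) ≤ ∑ i ∈ s, tensorRank3 F p q r (T i) :=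
  s.le_sum_of_subadditive (tensorRank3 F p q r) tensorRank3_zero.le tensorRank3_add_le T

theorem tensorRank3_matrixOuter_le_rank (A : Matrix (Fin p) (Fin q) F) (c : Fin r → F) :
    tensorRank3 F p q r (matrixOuter A c) ≤ A.rank := by
  obtain ⟨B, C, hBC⟩ := exists_rank_factorization A
  simpa using tensorRank3_le_card (fun u x => B x u) C (fun _ => c) fun x y z => by
    rw [matrixOuter, ← Finset.sum_mul, ← Matrix.mul_apply, hBC]

theorem tensorRank3_sum_matrixOuter_le {ι : Type*} (s : Finset ι)
    (A : ι → Matrix (Fin p) (Fin q) F) (c : ι → Fin r → F) :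
    tensorRank3 F p q r (∑ i ∈ s, matrixOuter (A i) (c i)) ≤ ∑ i ∈ s, (A i).rank :=
  (tensorRank3_sum_le s _).trans
    (Finset.sum_le_sum fun i _ => tensorRank3_matrixOuter_le_rank (A i) (c i))

theorem tensorRank3_le_sum_rank_add_sum_rank_general {ι : Type*} [Fintype ι]
    (T : Fin p → Fin q → Fin r → F) (M : ι → Matrix (Fin p) (Fin q) F) (lam : Fin r → ι → F) :
    tensorRank3 F p q r T ≤
      ∑ i, ((Matrix.of fun x y => T x y i) - ∑ j, lam i j • M j).rank + ∑ j, (M j).rank := by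
  conv_lhs => rw [eq_sum_matrixOuter_add_sum_matrixOuter T M lam]
  exact (tensorRank3_add_le _ _).trans
    (add_le_add (tensorRank3_sum_matrixOuter_le _ _ _) (tensorRank3_sum_matrixOuter_le _ _ _))

end TensorRank

/-- Let `T` be an order-3 tensor with slices `S_i = T(·,·,i)`, let
`a_1, …, a_k ∈ F^p`, `b_1, …, b_k ∈ F^q`, `λ_{i,j} ∈ F`, and set
`U_i = S_i - ∑_j λ_{i,j} a_j b_jᵀ`.  Then the tensor rank of `T` is at most
`∑_i rank U_i + ∑_j rank (a_j b_jᵀ)`. -/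
theorem tensorRank3_le_sum_rank_add_sum_rank
    (F : Type*) [Field F] (p q r k : ℕ) (T : Fin p → Fin q → Fin r → F)
    (a : Fin k → Fin p → F) (b : Fin k → Fin q → F) (lam : Fin r → Fin k → F) :
    tensorRank3 F p q r T ≤
      (∑ i : Fin r, ((Matrix.of fun x y => T x y i) -
          ∑ j : Fin k, lam i j • Matrix.vecMulVec (a j) (b j)).rank)
        + ∑ j : Fin k, (Matrix.vecMulVec (a j) (b j)).rank :=
  tensorRank3_le_sum_rank_add_sum_rank_general T (fun j => Matrix.vecMulVec (a j) (b j)) lam
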